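/- arXiv:2307.04102 — 3 statements merged into one kernel-verified Lean document; each statement's English description precedes it below -/
import Mathlib

section
/- Let λ > 0, let F₁,…,F_p : ℝⁿ → ℝ (ℝⁿ = ℝᵐ × ℝᵈ) be twice continuously differentiable with ‖∇F_j(z)‖ ≤ L and ‖∇²F_j(z)‖ ≤ M for all z and j, set φ_β = Σ_{j=1}^p β_j F_j, and fix points z¹,…,z^N and (z')¹,…,(z')^M in ℝⁿ. Define Ĵ(β) = (1/N) Σ_{i=1}^N φ_β(zⁱ) + (1/M) Σ_{i=1}^M φ_β^c((z')ⁱ). Then Ĵ is differentiable at β = 0 and ∂Ĵ/∂β_j |_{β=0} = (1/N) Σ_{i=1}^N F_j(zⁱ) − (1/M) Σ_{i=1}^M F_j((z')ⁱ). -/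
/-!
The competitor `z = z'` gives `φ^c(z') ≤ -φ(z')`. Conversely, if `φ` is `K`-Lipschitz, then
completing the square in `λa²/2 - Ka` and `b²/2 - Kb`, where `a = ‖y - y'‖` and `b = ‖x - x'‖`,
gives `φ^c(z') ≥ -φ(z') - (K²/2)(1/λ + 1)` (`ctrans_add_bounds`). The function `φ_β` is Lipschitz
with a constant of order `‖β‖`, so `φ_β^c(z') = -φ_β(z') + O(‖β‖²)`. As `φ_β(z')` is linear in `β`,
the `c`-transform is differentiable at `β = 0` with derivative `β ↦ -φ_β(z')`
(`hasFDerivAt_ctrans`), and the objective follows by summation.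
-/

open scoped RealInnerProductSpace
open MeasureTheory

noncomputable section

/-- The product space `ℝᵐ × ℝᵈ` whose points are written `z = (y, x)`. -/
abbrev Zsp (m d : ℕ) := EuclideanSpace ℝ (Fin m) × EuclideanSpace ℝ (Fin d)

/-- Weighted quadratic cost `c_λ(z,z') = (1/2)(λ‖y−y'‖² + ‖x−x'‖²)`. -/
noncomputable def cost (lam : ℝ) {m d : ℕ} (z z' : Zsp m d) : ℝ :=
  (lam * ‖z.1 - z'.1‖ ^ 2 + ‖z.2 - z'.2‖ ^ 2) / 2

/-- The `c`-transform `φ^c(z') = inf_z (c_λ(z,z') − φ(z))`. -/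
noncomputable def ctrans (lam : ℝ) {m d : ℕ} (φ : Zsp m d → ℝ) (z' : Zsp m d) : ℝ :=
  ⨅ z : Zsp m d, (cost lam z z' - φ z)

/-- Partial gradient in the `y` variable. -/
noncomputable def gradY {m d : ℕ} (F : Zsp m d → ℝ) (z : Zsp m d) :
    EuclideanSpace ℝ (Fin m) :=
  gradient (fun y => F (y, z.2)) z.1

/-- Partial gradient in the `x` variable. -/
noncomputable def gradX {m d : ℕ} (F : Zsp m d → ℝ) (z : Zsp m d) :
    EuclideanSpace ℝ (Fin d) :=
  gradient (fun x => F (z.1, x)) z.2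

/-- Rescaled gradient `∇_λF(z) = (∇_yF(z)/λ, ∇_xF(z))`. -/
noncomputable def gradLam (lam : ℝ) {m d : ℕ} (F : Zsp m d → ℝ) (z : Zsp m d) : Zsp m d :=
  (lam⁻¹ • gradY F z, gradX F z)

/-- `⟨∇F(z), ∇_λG(z)⟩ = ⟨∇_yF(z), ∇_yG(z)⟩/λ + ⟨∇_xF(z), ∇_xG(z)⟩`. -/
noncomputable def innerLam (lam : ℝ) {m d : ℕ} (F G : Zsp m d → ℝ) (z : Zsp m d) : ℝ :=
  ⟪gradY F z, gradY G z⟫ / lam + ⟪gradX F z, gradX G z⟫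

/-- The linear functional `β ↦ Σ_j β_j v_j`. -/
def linComb {p : ℕ} (v : Fin p → ℝ) : EuclideanSpace ℝ (Fin p) →L[ℝ] ℝ :=
  ∑ j, v j • EuclideanSpace.proj j

lemma linComb_apply {p : ℕ} (v : Fin p → ℝ) (β : EuclideanSpace ℝ (Fin p)) :
    linComb v β = ∑ j, β j * v j := by
  simp [linComb, mul_comm]

lemma linComb_single {p : ℕ} (v : Fin p → ℝ) (j : Fin p) :
    linComb v (EuclideanSpace.single j 1) = v j := by
  simp [linComb_apply, PiLp.single_apply]

/-- For a `K`-Lipschitz `φ`, the `c`-transform differs from `-φ` by at most `(K²/2)(1/λ + 1)`. -/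
lemma ctrans_add_bounds {m d : ℕ} {lam K : ℝ} (hlam : 0 < lam) (hK : 0 ≤ K)
    {φ : Zsp m d → ℝ} (hφ : ∀ z z', |φ z - φ z'| ≤ K * ‖z - z'‖) (z' : Zsp m d) :
    |ctrans lam φ z' + φ z'| ≤ K ^ 2 * ((1 / lam + 1) / 2) := by
  have key : ∀ z, -φ z' - K ^ 2 * ((1 / lam + 1) / 2) ≤ cost lam z z' - φ z := by
    intro z
    have h1 := (le_abs_self _).trans (hφ z z')
    have h2 : ‖z - z'‖ ≤ ‖z.1 - z'.1‖ + ‖z.2 - z'.2‖ := by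
      rw [Prod.norm_def]
      exact max_le_add_of_nonneg (norm_nonneg _) (norm_nonneg _)
    have h3 := mul_le_mul_of_nonneg_left h2 hK
    unfold cost
    generalize ‖z.1 - z'.1‖ = a at *
    generalize ‖z.2 - z'.2‖ = b at *
    have h4 : lam * a ^ 2 / 2 - K * a + K ^ 2 * (1 / lam) / 2 = lam / 2 * (a - K / lam) ^ 2 := by
      field_simp
      ring
    have h5 : 0 ≤ lam / 2 * (a - K / lam) ^ 2 := by positivity
    nlinarith [sq_nonneg (b - K)]
  have hlow : -φ z' - K ^ 2 * ((1 / lam + 1) / 2) ≤ ctrans lam φ z' := le_ciInf key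
  have hup : ctrans lam φ z' ≤ -φ z' := by
    have h := ciInf_le (f := fun z => cost lam z z' - φ z) ⟨_, Set.forall_mem_range.2 key⟩ z'
    simpa [ctrans, cost] using h
  rw [abs_le]
  constructor
  · linarith
  · have : 0 ≤ K ^ 2 * ((1 / lam + 1) / 2) := by positivity
    linarith

lemma hasFDerivAt_ctrans {m d p : ℕ} {lam L : ℝ} (hlam : 0 < lam)
    {F : Fin p → Zsp m d → ℝ} (hF : ∀ j, Differentiable ℝ (F j))
    (hL : ∀ j z, ‖fderiv ℝ (F j) z‖ ≤ L) (z' : Zsp m d) :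
    HasFDerivAt (fun β : EuclideanSpace ℝ (Fin p) => ctrans lam (fun z => ∑ j, β j * F j z) z')
      (-linComb fun j => F j z') 0 := by
  have hlip : ∀ j z w, |F j z - F j w| ≤ |L| * ‖z - w‖ := fun j z w => by
    simpa using Convex.norm_image_sub_le_of_norm_fderiv_le (𝕜 := ℝ) (s := Set.univ)
      (fun x _ => hF j x) (fun x _ => (hL j x).trans (le_abs_self L)) convex_univ
      (Set.mem_univ w) (Set.mem_univ z)
  have hphi : ∀ (β : EuclideanSpace ℝ (Fin p)) z w,
      |(∑ j, β j * F j z) - ∑ j, β j * F j w| ≤ (p * |L| * ‖β‖) * ‖z - w‖ := by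
    intro β z w
    rw [← Finset.sum_sub_distrib]
    refine (Finset.abs_sum_le_sum_abs _ _).trans ?_
    calc ∑ j, |β j * F j z - β j * F j w| ≤ ∑ _j : Fin p, ‖β‖ * (|L| * ‖z - w‖) := by
          refine Finset.sum_le_sum fun j _ => ?_
          rw [← mul_sub, abs_mul]
          exact mul_le_mul (PiLp.norm_apply_le β j) (hlip j z w) (abs_nonneg _) (norm_nonneg _)
      _ = (p * |L| * ‖β‖) * ‖z - w‖ := by
          simp only [Finset.sum_const, Finset.card_univ, Fintype.card_fin, nsmul_eq_mul]
          ring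
  have hO : (fun β : EuclideanSpace ℝ (Fin p) =>
      ctrans lam (fun z => ∑ j, β j * F j z) z' + linComb (fun j => F j z') β)
        =O[nhds 0] fun β => ‖β - 0‖ ^ 2 := by
    refine Asymptotics.IsBigO.of_bound ((p * |L|) ^ 2 * ((1 / lam + 1) / 2))
      (Filter.Eventually.of_forall fun β => ?_)
    have h := ctrans_add_bounds hlam (by positivity) (hphi β) z'
    rw [linComb_apply, Real.norm_eq_abs, sub_zero, norm_pow, norm_norm]
    refine h.trans_eq ?_
    ring
  have h := (hO.hasFDerivAt one_lt_two).sub (linComb fun j => F j z').hasFDerivAt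
  rw [zero_sub] at h
  refine h.congr_of_eventuallyEq (Filter.Eventually.of_forall fun β => ?_)
  simp

/-- the empirical dual objective
`Ĵ(β) = (1/N) Σ_i φ_β(zⁱ) + (1/M) Σ_i φ_β^c((z')ⁱ)` is differentiable at `β = 0` with
`∂Ĵ/∂β_j |₀ = (1/N) Σ_i F_j(zⁱ) − (1/M) Σ_i F_j((z')ⁱ)`. -/
theorem empirical_objective_gradient
    (m d p N M : ℕ) (lam L Mb : ℝ) (hlam : 0 < lam)
    (F : Fin p → Zsp m d → ℝ)
    (hC2 : ∀ j, ContDiff ℝ 2 (F j))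
    (hL : ∀ j z, ‖fderiv ℝ (F j) z‖ ≤ L)
    (hMb : ∀ j z, ‖fderiv ℝ (fderiv ℝ (F j)) z‖ ≤ Mb)
    (zR : Fin N → Zsp m d) (zT : Fin M → Zsp m d) :
    DifferentiableAt ℝ (fun β : EuclideanSpace ℝ (Fin p) =>
        (1 / N : ℝ) * ∑ i, (∑ j, β j * F j (zR i))
          + (1 / M : ℝ) * ∑ i, ctrans lam (fun z => ∑ j, β j * F j z) (zT i)) 0 ∧
    ∀ j : Fin p,
      fderiv ℝ (fun β : EuclideanSpace ℝ (Fin p) =>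
          (1 / N : ℝ) * ∑ i, (∑ j, β j * F j (zR i))
            + (1 / M : ℝ) * ∑ i, ctrans lam (fun z => ∑ j, β j * F j z) (zT i)) 0
          (EuclideanSpace.single j 1)
        = (1 / N : ℝ) * ∑ i, F j (zR i) - (1 / M : ℝ) * ∑ i, F j (zT i) := by
  have hmain := ((HasFDerivAt.fun_sum (u := Finset.univ) fun i _ =>
      (linComb fun j => F j (zR i)).hasFDerivAt (x := 0)).const_mul (1 / N : ℝ)).add
    ((HasFDerivAt.fun_sum (u := Finset.univ) fun i _ =>
      hasFDerivAt_ctrans hlam (fun j => (hC2 j).differentiable two_ne_zero) hL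
        (zT i)).const_mul (1 / M : ℝ))
  simp only [linComb_apply] at hmain
  refine ⟨hmain.differentiableAt, fun j => ?_⟩
  refine (congrArg (fun T => T (EuclideanSpace.single j 1)) hmain.fderiv).trans ?_
  simp [linComb_single, sub_eq_add_neg]
end
end

section
/- Let λ > 0, let ρ and μ be probability measures on ℝⁿ = ℝᵐ × ℝᵈ, and let ψ : ℝⁿ → ℝ be bounded and twice continuously differentiable with ‖∇ψ(z)‖ ≤ L and ‖∇²ψ(z)‖ ≤ M for all z. Define J(ε) = ∫ εψ dρ + ∫ (εψ)^c dμ. Then J is differentiable at ε = 0 with J'(0) = ∫ ψ dρ − ∫ ψ dμ; i.e., the first variation of the dual objective at the zero potential is the (signed) measure ρ − μ. -/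
/-!
Testing the infimum at `z = z'` gives `(εψ)^c ≤ -εψ`. Conversely `ψ` is `L`-Lipschitz and the cost
dominates `a‖z - z'‖²` with `a = min lam 1 / 2`, so completing the square in `‖z - z'‖` gives
`(εψ)^c ≥ -εψ - ε²L²/(4a)`. Hence `(εψ)^c = -εψ + O(ε²)` uniformly in the base point
(`abs_ctrans_add_le`), and integrating against the probability measure `μ` yields
`J(ε) = ε(∫ ψ dρ - ∫ ψ dμ) + O(ε²)`. The `c`-transform is measurable because an infimum of
continuous functions is upper semicontinuous.
-/

open scoped RealInnerProductSpace
open MeasureTheory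

noncomputable section

lemma cost_self (lam : ℝ) {m d : ℕ} (z : Zsp m d) : cost lam z z = 0 := by
  simp [cost]

/-- Coercivity of the cost with respect to the sup norm of the product `ℝᵐ × ℝᵈ`. -/
lemma mul_norm_sq_le_cost {lam : ℝ} (hlam : 0 < lam) {m d : ℕ} (z z' : Zsp m d) :
    min lam 1 / 2 * ‖z - z'‖ ^ 2 ≤ cost lam z z' := by
  have h1 : min lam 1 ≤ lam := min_le_left _ _
  have h2 : min lam 1 ≤ 1 := min_le_right _ _
  have h0 : 0 < min lam 1 := lt_min hlam one_pos
  have hy := sq_nonneg ‖z.1 - z'.1‖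
  have hx := sq_nonneg ‖z.2 - z'.2‖
  unfold cost
  rcases max_choice ‖(z - z').1‖ ‖(z - z').2‖ with h | h
  · rw [Prod.norm_def, h, Prod.fst_sub]
    nlinarith [mul_le_mul_of_nonneg_right h1 hy]
  · rw [Prod.norm_def, h, Prod.snd_sub]
    nlinarith [mul_le_mul_of_nonneg_right h2 hx, mul_nonneg hlam.le hy]

section

variable {m d : ℕ} {lam L : ℝ} {ψ : Zsp m d → ℝ}

/-- Completing the square: a uniform lower bound for the functions whose infimum is `(εψ)^c`. -/
lemma neg_sub_le_cost_sub (hlam : 0 < lam)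
    (hLip : ∀ z z', |ψ z - ψ z'| ≤ L * ‖z - z'‖) (ε : ℝ) (z z' : Zsp m d) :
    -(ε * ψ z') - L ^ 2 / (2 * min lam 1) * ε ^ 2 ≤ cost lam z z' - ε * ψ z := by
  have h0 : 0 < min lam 1 := lt_min hlam one_pos
  have hc := mul_norm_sq_le_cost hlam z z'
  have h1 : ε * (ψ z - ψ z') ≤ |ε| * (L * ‖z - z'‖) :=
    (le_abs_self _).trans (by
      rw [abs_mul]; exact mul_le_mul_of_nonneg_left (hLip z z') (abs_nonneg ε))
  have h2 : |ε| * (L * ‖z - z'‖)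
      ≤ min lam 1 / 2 * ‖z - z'‖ ^ 2 + L ^ 2 / (2 * min lam 1) * ε ^ 2 := by
    have key : min lam 1 / 2 * ‖z - z'‖ ^ 2 + L ^ 2 / (2 * min lam 1) * |ε| ^ 2
        - |ε| * (L * ‖z - z'‖)
        = (min lam 1 * ‖z - z'‖ - L * |ε|) ^ 2 / (2 * min lam 1) := by
      field_simp
      ring
    have hnn : 0 ≤ (min lam 1 * ‖z - z'‖ - L * |ε|) ^ 2 / (2 * min lam 1) := by positivity
    rw [sq_abs] at key
    linarith
  linarith [mul_sub ε (ψ z) (ψ z')]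

lemma bddBelow_range_cost_sub (hlam : 0 < lam)
    (hLip : ∀ z z', |ψ z - ψ z'| ≤ L * ‖z - z'‖) (ε : ℝ) (w : Zsp m d) :
    BddBelow (Set.range fun z : Zsp m d => cost lam z w - ε * ψ z) :=
  ⟨_, Set.forall_mem_range.2 fun z => neg_sub_le_cost_sub hlam hLip ε z w⟩

/-- Uniform first-order expansion `(εψ)^c = -εψ + O(ε²)`. -/
lemma abs_ctrans_add_le (hlam : 0 < lam)
    (hLip : ∀ z z', |ψ z - ψ z'| ≤ L * ‖z - z'‖) (ε : ℝ) (z' : Zsp m d) :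
    |ctrans lam (fun z => ε * ψ z) z' + ε * ψ z'| ≤ L ^ 2 / (2 * min lam 1) * ε ^ 2 := by
  have h0 : 0 < min lam 1 := lt_min hlam one_pos
  have hlow : -(ε * ψ z') - L ^ 2 / (2 * min lam 1) * ε ^ 2
      ≤ ctrans lam (fun z => ε * ψ z) z' :=
    le_ciInf fun z => neg_sub_le_cost_sub hlam hLip ε z z'
  have hup : ctrans lam (fun z => ε * ψ z) z' ≤ cost lam z' z' - ε * ψ z' :=
    ciInf_le (bddBelow_range_cost_sub hlam hLip ε z') z'
  rw [cost_self] at hup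
  have hnn : 0 ≤ L ^ 2 / (2 * min lam 1) * ε ^ 2 := by positivity
  rw [abs_le]
  constructor <;> linarith

lemma measurable_ctrans (hlam : 0 < lam)
    (hLip : ∀ z z', |ψ z - ψ z'| ≤ L * ‖z - z'‖) (ε : ℝ) :
    Measurable (ctrans lam (fun z => ε * ψ z)) := by
  apply UpperSemicontinuous.measurable
  refine upperSemicontinuous_ciInf (fun z' => bddBelow_range_cost_sub hlam hLip ε z') fun z => ?_
  apply Continuous.upperSemicontinuous
  unfold cost
  fun_prop

end

/-- the first variation of the dual objective
`J(ε) = ∫ εψ dρ + ∫ (εψ)^c dμ` at the zero potential is `ρ − μ`, i.e.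
`J'(0) = ∫ ψ dρ − ∫ ψ dμ`. -/
theorem dual_objective_first_variation
    (m d : ℕ) (lam L M B : ℝ) (hlam : 0 < lam)
    (ρ μ : Measure (Zsp m d)) [IsProbabilityMeasure ρ] [IsProbabilityMeasure μ]
    (ψ : Zsp m d → ℝ)
    (hB : ∀ z, |ψ z| ≤ B)
    (hC2 : ContDiff ℝ 2 ψ)
    (hL : ∀ z, ‖fderiv ℝ ψ z‖ ≤ L)
    (hM : ∀ z, ‖fderiv ℝ (fderiv ℝ ψ) z‖ ≤ M) :
    HasDerivAt
      (fun ε : ℝ => ∫ z, ε * ψ z ∂ρ + ∫ z', ctrans lam (fun z => ε * ψ z) z' ∂μ)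
      (∫ z, ψ z ∂ρ - ∫ z, ψ z ∂μ) 0 := by
  have hdiff : Differentiable ℝ ψ := hC2.differentiable (by norm_num)
  have hLip : ∀ z z', |ψ z - ψ z'| ≤ L * ‖z - z'‖ := fun z z' =>
    convex_univ.norm_image_sub_le_of_norm_fderiv_le (𝕜 := ℝ) (fun w _ => hdiff w)
      (fun w _ => hL w) (Set.mem_univ z') (Set.mem_univ z)
  have hψμ : Integrable ψ μ :=
    Integrable.of_bound hC2.continuous.aestronglyMeasurable B (.of_forall hB)
  set C : ℝ := L ^ 2 / (2 * min lam 1)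
  have hbound : ∀ ε z', ‖ctrans lam (fun z => ε * ψ z) z' + ε * ψ z'‖ ≤ C * ε ^ 2 :=
    fun ε z' => abs_ctrans_add_le hlam hLip ε z'
  have hint : ∀ ε, Integrable (fun z' => ctrans lam (fun z => ε * ψ z) z' + ε * ψ z') μ :=
    fun ε => Integrable.of_bound
      ((measurable_ctrans hlam hLip ε).add
        (hC2.continuous.measurable.const_mul ε)).aestronglyMeasurable _ (.of_forall (hbound ε))
  have hsplit : ∀ ε, ∫ z', ctrans lam (fun z => ε * ψ z) z' ∂μ
      = ∫ z', (ctrans lam (fun z => ε * ψ z) z' + ε * ψ z') ∂μ - ε * ∫ z, ψ z ∂μ := by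
    intro ε
    rw [← integral_const_mul, ← integral_sub (hint ε) (hψμ.const_mul ε)]
    simp
  have hR : ∀ ε, ‖∫ z', (ctrans lam (fun z => ε * ψ z) z' + ε * ψ z') ∂μ‖ ≤ C * ε ^ 2 := by
    intro ε
    simpa using norm_integral_le_of_norm_le_const (μ := μ) (.of_forall (hbound ε))
  have hR0 : ∫ z', (ctrans lam (fun z => 0 * ψ z) z' + 0 * ψ z') ∂μ = 0 := by
    simpa using hR 0
  rw [hasDerivAt_iff_isLittleO_nhds_zero]
  have hO : (fun ε : ℝ => ∫ z', (ctrans lam (fun z => ε * ψ z) z' + ε * ψ z') ∂μ)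
      =O[nhds 0] fun ε : ℝ => ε ^ 2 :=
    Asymptotics.IsBigO.of_bound C (.of_forall fun ε => by
      simpa using hR ε)
  have ho : (fun ε : ℝ => ε ^ 2) =o[nhds 0] fun ε : ℝ => ε :=
    Asymptotics.isLittleO_pow_id one_lt_two
  refine (hO.trans_isLittleO ho).congr_left fun ε => ?_
  simp only [zero_add]
  rw [hsplit ε, hsplit 0, hR0, integral_const_mul, integral_const_mul, smul_eq_mul]
  ring
end
end

section
/- Let λ > 0 and let F₁,…,F_p : ℝⁿ → ℝ (ℝⁿ = ℝᵐ × ℝᵈ) be twice continuously differentiable with ‖∇F_j(z)‖ ≤ L and ‖∇²F_j(z)‖ ≤ M for all z and j, and set φ_β = Σ_{j=1}^p β_j F_j. Then there exist δ > 0 and C ≥ 0 such that for every β with ‖β‖ ≤ δ, every z' ∈ ℝⁿ, and every global minimizer z̄ of z ↦ c_λ(z,z') − φ_β(z), one has |‖∇_yφ_β(z̄)‖²/λ + ‖∇_xφ_β(z̄)‖² − Σ_{j,k} β_j β_k ⟨∇F_j(z'), ∇_λF_k(z')⟩| ≤ C‖β‖³. -/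
/-!
Write `φ = ∑ j, β j • F j` and `S = ∑ j, |β j|`. By bilinearity of the inner product the double sum
equals `‖∇_yφ(z')‖²/λ + ‖∇_xφ(z')‖²` (`sum_innerLam`), so the claim compares the same quadratic
expression at `z̄` and at `z'`. Testing minimality of `z̄` against the competitor `z'` gives
`c_λ(z̄,z') ≤ φ(z̄) - φ(z') ≤ S L ‖z̄ - z'‖`, and since the cost dominates
`min(λ,1) ‖z̄ - z'‖² / 2`, this yields `‖z̄ - z'‖ = O(S)` (`norm_sub_le_of_minimizer`).
The partial gradients of `φ` are bounded by `S L` and `S M`-Lipschitz, so the difference of squares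
is at most `2 S L · S M · O(S) = O(S³)`, and `S ≤ p ‖β‖`. The first-order optimality condition is
not needed, and `δ = 1` works.
-/


open scoped RealInnerProductSpace
open MeasureTheory

noncomputable section

/-- `∇_yF` is the Riesz representative of the derivative restricted to the first factor. -/
lemma gradY_eq {m d : ℕ} {F : Zsp m d → ℝ} {z : Zsp m d} (hF : DifferentiableAt ℝ F z) :
    gradY F z = (InnerProductSpace.toDual ℝ _).symm
      ((fderiv ℝ F z).comp (ContinuousLinearMap.inl ℝ _ _)) := by
  have h : HasFDerivAt (fun y => F (y, z.2))
      ((fderiv ℝ F z).comp (ContinuousLinearMap.inl ℝ _ _)) z.1 :=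
    HasFDerivAt.comp z.1 (g := F) hF.hasFDerivAt (hasFDerivAt_prodMk_left z.1 z.2)
  rw [gradY, gradient, h.fderiv]

/-- `∇_xF` is the Riesz representative of the derivative restricted to the second factor. -/
lemma gradX_eq {m d : ℕ} {F : Zsp m d → ℝ} {z : Zsp m d} (hF : DifferentiableAt ℝ F z) :
    gradX F z = (InnerProductSpace.toDual ℝ _).symm
      ((fderiv ℝ F z).comp (ContinuousLinearMap.inr ℝ _ _)) := by
  have h : HasFDerivAt (fun x => F (z.1, x))
      ((fderiv ℝ F z).comp (ContinuousLinearMap.inr ℝ _ _)) z.2 :=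
    HasFDerivAt.comp z.2 (g := F) hF.hasFDerivAt (hasFDerivAt_prodMk_right z.1 z.2)
  rw [gradX, gradient, h.fderiv]

lemma norm_comp_inl_le {m d : ℕ} (T : Zsp m d →L[ℝ] ℝ) :
    ‖T.comp (ContinuousLinearMap.inl ℝ _ _)‖ ≤ ‖T‖ :=
  ContinuousLinearMap.opNorm_le_bound _ (norm_nonneg _) fun y => by
    simpa using T.le_opNorm (y, 0)

lemma norm_comp_inr_le {m d : ℕ} (T : Zsp m d →L[ℝ] ℝ) :
    ‖T.comp (ContinuousLinearMap.inr ℝ _ _)‖ ≤ ‖T‖ :=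
  ContinuousLinearMap.opNorm_le_bound _ (norm_nonneg _) fun x => by
    simpa using T.le_opNorm (0, x)

lemma norm_gradY_le {m d : ℕ} {F : Zsp m d → ℝ} (hF : Differentiable ℝ F) (z : Zsp m d) :
    ‖gradY F z‖ ≤ ‖fderiv ℝ F z‖ := by
  rw [gradY_eq (hF z), LinearIsometryEquiv.norm_map]
  exact norm_comp_inl_le _

lemma norm_gradX_le {m d : ℕ} {F : Zsp m d → ℝ} (hF : Differentiable ℝ F) (z : Zsp m d) :
    ‖gradX F z‖ ≤ ‖fderiv ℝ F z‖ := by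
  rw [gradX_eq (hF z), LinearIsometryEquiv.norm_map]
  exact norm_comp_inr_le _

lemma norm_gradY_sub_le {m d : ℕ} {F : Zsp m d → ℝ} (hF : Differentiable ℝ F) (z w : Zsp m d) :
    ‖gradY F z - gradY F w‖ ≤ ‖fderiv ℝ F z - fderiv ℝ F w‖ := by
  rw [gradY_eq (hF z), gradY_eq (hF w), ← map_sub, LinearIsometryEquiv.norm_map,
    ← ContinuousLinearMap.sub_comp]
  exact norm_comp_inl_le _

lemma norm_gradX_sub_le {m d : ℕ} {F : Zsp m d → ℝ} (hF : Differentiable ℝ F) (z w : Zsp m d) :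
    ‖gradX F z - gradX F w‖ ≤ ‖fderiv ℝ F z - fderiv ℝ F w‖ := by
  rw [gradX_eq (hF z), gradX_eq (hF w), ← map_sub, LinearIsometryEquiv.norm_map,
    ← ContinuousLinearMap.sub_comp]
  exact norm_comp_inr_le _

lemma fderiv_comb {m d p : ℕ} {F : Fin p → Zsp m d → ℝ} (hF : ∀ j, Differentiable ℝ (F j))
    (β : EuclideanSpace ℝ (Fin p)) (z : Zsp m d) :
    fderiv ℝ (fun z => ∑ j, β j * F j z) z = ∑ j, β j • fderiv ℝ (F j) z := by
  have h : HasFDerivAt (fun z => ∑ j, β j * F j z) (∑ j, β j • fderiv ℝ (F j) z) z :=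
    HasFDerivAt.fun_sum fun j _ => (hF j z).hasFDerivAt.const_mul (β j)
  exact h.fderiv

lemma differentiable_comb {m d p : ℕ} {F : Fin p → Zsp m d → ℝ}
    (hF : ∀ j, Differentiable ℝ (F j)) (β : EuclideanSpace ℝ (Fin p)) :
    Differentiable ℝ (fun z => ∑ j, β j * F j z) :=
  Differentiable.fun_sum fun j _ => (hF j).const_mul (β j)

lemma gradY_comb {m d p : ℕ} {F : Fin p → Zsp m d → ℝ} (hF : ∀ j, Differentiable ℝ (F j))
    (β : EuclideanSpace ℝ (Fin p)) (z : Zsp m d) :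
    gradY (fun z => ∑ j, β j * F j z) z = ∑ j, β j • gradY (F j) z := by
  rw [gradY_eq (differentiable_comb hF β z), fderiv_comb hF,
    ContinuousLinearMap.finsetSum_comp, map_sum]
  refine Finset.sum_congr rfl fun j _ => ?_
  rw [gradY_eq (hF j z), ContinuousLinearMap.smul_comp]
  simp

lemma gradX_comb {m d p : ℕ} {F : Fin p → Zsp m d → ℝ} (hF : ∀ j, Differentiable ℝ (F j))
    (β : EuclideanSpace ℝ (Fin p)) (z : Zsp m d) :
    gradX (fun z => ∑ j, β j * F j z) z = ∑ j, β j • gradX (F j) z := by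
  rw [gradX_eq (differentiable_comb hF β z), fderiv_comb hF,
    ContinuousLinearMap.finsetSum_comp, map_sum]
  refine Finset.sum_congr rfl fun j _ => ?_
  rw [gradX_eq (hF j z), ContinuousLinearMap.smul_comp]
  simp

lemma norm_sq_sum_smul {E : Type*} [NormedAddCommGroup E] [InnerProductSpace ℝ E] {p : ℕ}
    (β : EuclideanSpace ℝ (Fin p)) (v : Fin p → E) :
    ‖∑ j, β j • v j‖ ^ 2 = ∑ j, ∑ k, β j * β k * ⟪v j, v k⟫ := by
  rw [← real_inner_self_eq_norm_sq, sum_inner]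
  refine Finset.sum_congr rfl fun j _ => ?_
  rw [inner_sum]
  refine Finset.sum_congr rfl fun k _ => ?_
  rw [real_inner_smul_left, real_inner_smul_right, mul_assoc]

/-- The quadratic form of the Gram matrix `⟨∇F_j, ∇_λF_k⟩` at `β` is the weighted squared norm of
the gradient of the linear combination. -/
lemma sum_innerLam {m d p : ℕ} {F : Fin p → Zsp m d → ℝ} (hF : ∀ j, Differentiable ℝ (F j))
    (lam : ℝ) (β : EuclideanSpace ℝ (Fin p)) (z : Zsp m d) :
    ∑ j, ∑ k, β j * β k * innerLam lam (F j) (F k) z =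
      ‖gradY (fun z => ∑ j, β j * F j z) z‖ ^ 2 / lam
        + ‖gradX (fun z => ∑ j, β j * F j z) z‖ ^ 2 := by
  rw [gradY_comb hF, gradX_comb hF, norm_sq_sum_smul, norm_sq_sum_smul]
  simp only [innerLam, Finset.sum_div, ← Finset.sum_add_distrib]
  refine Finset.sum_congr rfl fun j _ => Finset.sum_congr rfl fun k _ => ?_
  ring

lemma norm_sum_smul_le {E : Type*} [NormedAddCommGroup E] [NormedSpace ℝ E] {p : ℕ}
    (β : EuclideanSpace ℝ (Fin p)) (v : Fin p → E) {K : ℝ} (hv : ∀ j, ‖v j‖ ≤ K) :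
    ‖∑ j, β j • v j‖ ≤ (∑ j, |β j|) * K := by
  rw [Finset.sum_mul]
  refine norm_sum_le_of_le _ fun j _ => ?_
  rw [norm_smul, Real.norm_eq_abs]
  exact mul_le_mul_of_nonneg_left (hv j) (abs_nonneg _)

lemma norm_sum_smul_sub_le {E : Type*} [NormedAddCommGroup E] [NormedSpace ℝ E] {p : ℕ}
    (β : EuclideanSpace ℝ (Fin p)) (v w : Fin p → E) {K : ℝ} (hvw : ∀ j, ‖v j - w j‖ ≤ K) :
    ‖∑ j, β j • v j - ∑ j, β j • w j‖ ≤ (∑ j, |β j|) * K := by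
  rw [← Finset.sum_sub_distrib]
  simp only [← smul_sub]
  exact norm_sum_smul_le β _ hvw

lemma norm_fderiv_comb_sub_le {m d p : ℕ} {F : Fin p → Zsp m d → ℝ}
    (hF : ∀ j, Differentiable ℝ (F j)) (β : EuclideanSpace ℝ (Fin p)) {z w : Zsp m d} {K : ℝ}
    (h : ∀ j, ‖fderiv ℝ (F j) z - fderiv ℝ (F j) w‖ ≤ K) :
    ‖fderiv ℝ (fun z => ∑ j, β j * F j z) z - fderiv ℝ (fun z => ∑ j, β j * F j z) w‖
      ≤ (∑ j, |β j|) * K := by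
  rw [fderiv_comb hF, fderiv_comb hF]
  exact norm_sum_smul_sub_le β (fun j => fderiv ℝ (F j) z) (fun j => fderiv ℝ (F j) w) h

lemma abs_norm_sq_sub_le {E : Type*} [NormedAddCommGroup E] {a b : E} {A D : ℝ}
    (ha : ‖a‖ ≤ A) (hb : ‖b‖ ≤ A) (hab : ‖a - b‖ ≤ D) :
    |‖a‖ ^ 2 - ‖b‖ ^ 2| ≤ 2 * A * D := by
  have h1 : |‖a‖ - ‖b‖| ≤ D := (abs_norm_sub_norm_le a b).trans hab
  have h2 : ‖a‖ ^ 2 - ‖b‖ ^ 2 = (‖a‖ + ‖b‖) * (‖a‖ - ‖b‖) := by ring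
  rw [h2, abs_mul, abs_of_nonneg (by positivity)]
  exact mul_le_mul (by linarith) h1 (abs_nonneg _) (by linarith [norm_nonneg a])

/-- The cost is coercive for the sup norm carried by the product space. -/
lemma min_mul_norm_sq_le_cost {m d : ℕ} {lam : ℝ} (hlam : 0 < lam) (z w : Zsp m d) :
    min lam 1 * ‖z - w‖ ^ 2 ≤ 2 * cost lam z w := by
  have h1 := mul_le_mul_of_nonneg_right (min_le_left lam 1) (sq_nonneg ‖z.1 - w.1‖)
  have h2 := mul_le_mul_of_nonneg_right (min_le_right lam 1) (sq_nonneg ‖z.2 - w.2‖)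
  have h3 : 0 ≤ lam * ‖z.1 - w.1‖ ^ 2 := by positivity
  have h4 := sq_nonneg ‖z.2 - w.2‖
  unfold cost
  rw [Prod.norm_def, Prod.fst_sub, Prod.snd_sub]
  rcases max_choice ‖z.1 - w.1‖ ‖z.2 - w.2‖ with h | h <;> rw [h] <;> linarith

/-- A minimizer stays close to `w`: the competitor `w` itself has zero cost, while moving away by
`r` gains at most `A r` and costs at least `min(λ,1) r² / 2`. -/
lemma norm_sub_le_of_minimizer {m d : ℕ} {lam : ℝ} (hlam : 0 < lam) {φ : Zsp m d → ℝ}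
    (hφ : Differentiable ℝ φ) {A : ℝ} (hA : 0 ≤ A) (hb : ∀ z, ‖fderiv ℝ φ z‖ ≤ A) {z w : Zsp m d}
    (hmin : cost lam z w - φ z ≤ cost lam w w - φ w) :
    ‖z - w‖ ≤ 2 * A / min lam 1 := by
  have hmu : 0 < min lam 1 := lt_min hlam one_pos
  have h0 : cost lam w w = 0 := by simp [cost]
  have h1 : ‖φ z - φ w‖ ≤ A * ‖z - w‖ :=
    convex_univ.norm_image_sub_le_of_norm_fderiv_le (fun x _ => hφ x) (fun x _ => hb x)
      (Set.mem_univ _) (Set.mem_univ _)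
  have h2 := min_mul_norm_sq_le_cost hlam z w
  have h3 := (le_abs_self _).trans h1
  rw [le_div_iff₀ hmu]
  rcases (norm_nonneg (z - w)).eq_or_lt with h | h
  · rw [← h]; linarith
  · refine le_of_mul_le_mul_right ?_ h
    nlinarith

lemma sum_abs_le {p : ℕ} (β : EuclideanSpace ℝ (Fin p)) : ∑ j, |β j| ≤ p * ‖β‖ := by
  have := Finset.sum_le_sum (s := Finset.univ) fun j _ => PiLp.norm_apply_le β j
  simpa using this

/-- uniform third-order estimate for the quadratic term evaluated at a
global minimizer `z̄`:
`‖∇_yφ_β(z̄)‖²/λ + ‖∇_xφ_β(z̄)‖² = Σ_{j,k} β_jβ_k ⟨∇F_j(z'), ∇_λF_k(z')⟩ + O(‖β‖³)`. -/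
theorem minimizer_quadratic_term_expansion
    (m d p : ℕ) (lam L M : ℝ) (hlam : 0 < lam)
    (F : Fin p → Zsp m d → ℝ)
    (hC2 : ∀ j, ContDiff ℝ 2 (F j))
    (hL : ∀ j z, ‖fderiv ℝ (F j) z‖ ≤ L)
    (hM : ∀ j z, ‖fderiv ℝ (fderiv ℝ (F j)) z‖ ≤ M) :
    ∃ δ > (0 : ℝ), ∃ C ≥ (0 : ℝ), ∀ β : EuclideanSpace ℝ (Fin p), ‖β‖ ≤ δ →
      ∀ z' zbar : Zsp m d,
        (∀ z : Zsp m d,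
            cost lam zbar z' - (∑ j, β j * F j zbar)
              ≤ cost lam z z' - ∑ j, β j * F j z) →
          |‖gradY (fun z => ∑ j, β j * F j z) zbar‖ ^ 2 / lam
              + ‖gradX (fun z => ∑ j, β j * F j z) zbar‖ ^ 2
              - ∑ j, ∑ k, β j * β k * innerLam lam (F j) (F k) z'|
            ≤ C * ‖β‖ ^ 3 := by
  have hF : ∀ j, Differentiable ℝ (F j) := fun j => (hC2 j).differentiable (by norm_num)
  have hF' : ∀ j, Differentiable ℝ (fderiv ℝ (F j)) := fun j =>
    ((hC2 j).fderiv_right (m := 1) (by norm_num)).differentiable (by norm_num)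
  have hmu : 0 < min lam 1 := lt_min hlam one_pos
  -- For `p = 0` the constants `L` and `M` may be negative, hence the absolute values.
  refine ⟨1, one_pos, (1 / lam + 1) * (4 * |L| ^ 2 * |M| / min lam 1) * (p : ℝ) ^ 3,
    by positivity, fun β _ z' zbar hmin => ?_⟩
  rw [sum_innerLam hF]
  have hφ := differentiable_comb hF β
  set S : ℝ := ∑ j, |β j| with hS
  have hS0 : 0 ≤ S := Finset.sum_nonneg fun j _ => abs_nonneg _
  have hA : ∀ z, ‖fderiv ℝ (fun z => ∑ j, β j * F j z) z‖ ≤ S * |L| := fun z => by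
    rw [fderiv_comb hF]
    exact norm_sum_smul_le β _ fun j => (hL j z).trans (le_abs_self L)
  have hr : ‖zbar - z'‖ ≤ 2 * (S * |L|) / min lam 1 :=
    norm_sub_le_of_minimizer hlam hφ (by positivity) hA (hmin z')
  have hD : ‖fderiv ℝ (fun z => ∑ j, β j * F j z) zbar
      - fderiv ℝ (fun z => ∑ j, β j * F j z) z'‖
      ≤ S * (|M| * (2 * (S * |L|) / min lam 1)) := by
    refine norm_fderiv_comb_sub_le hF β fun j => ?_
    have h : ‖fderiv ℝ (F j) zbar - fderiv ℝ (F j) z'‖ ≤ |M| * ‖zbar - z'‖ :=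
      convex_univ.norm_image_sub_le_of_norm_fderiv_le (fun x _ => hF' j x)
        (fun x _ => (hM j x).trans (le_abs_self M)) (Set.mem_univ _) (Set.mem_univ _)
    exact h.trans (mul_le_mul_of_nonneg_left hr (abs_nonneg M))
  have hY := abs_norm_sq_sub_le ((norm_gradY_le hφ zbar).trans (hA _))
    ((norm_gradY_le hφ z').trans (hA _)) ((norm_gradY_sub_le hφ zbar z').trans hD)
  have hX := abs_norm_sq_sub_le ((norm_gradX_le hφ zbar).trans (hA _))
    ((norm_gradX_le hφ z').trans (hA _)) ((norm_gradX_sub_le hφ zbar z').trans hD)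
  rw [add_sub_add_comm, ← sub_div]
  refine (abs_add_le _ _).trans ?_
  rw [abs_div, abs_of_pos hlam]
  calc _ ≤ 2 * (S * |L|) * (S * (|M| * (2 * (S * |L|) / min lam 1))) / lam
        + 2 * (S * |L|) * (S * (|M| * (2 * (S * |L|) / min lam 1))) := by gcongr
    _ = (1 / lam + 1) * (4 * |L| ^ 2 * |M| / min lam 1) * S ^ 3 := by ring
    _ ≤ (1 / lam + 1) * (4 * |L| ^ 2 * |M| / min lam 1) * (p * ‖β‖) ^ 3 := by
        gcongr
        exact sum_abs_le β
    _ = _ := by ring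
end
end
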